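/- arXiv:2210.16658 — 2 statements merged into one kernel-verified Lean document; each statement's English description precedes it below -/
import Mathlib

section
/- Let λ_W > 0 and λ_H ≥ 0. The gradient of the central-path loss is globally Lipschitz with respect to the Frobenius norm: for all H, H' ∈ ℝ^{d×Kn}, ‖∇L(H) − ∇L(H')‖_F ≤ (1/(Kn)) (10/λ_W + λ_H) ‖H − H'‖_F. -/
open Matrix Filter
open scoped BigOperators

noncomputable section

variable {K n d : ℕ}

/-- The one-hot label matrix `Y = I_K ⊗ 1_nᵀ`: columns are indexed by class/sample pairs. -/
def Ymat (K n : ℕ) : Matrix (Fin K) (Fin K × Fin n) ℝ :=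
  Matrix.of fun k p => if p.1 = k then 1 else 0

/-- Squared Frobenius norm. -/
def frobSq {m p : Type*} [Fintype m] [Fintype p] (M : Matrix m p ℝ) : ℝ :=
  ∑ i, ∑ j, (M i j) ^ 2

/-- Frobenius norm. -/
def frobNorm {m p : Type*} [Fintype m] [Fintype p] (M : Matrix m p ℝ) : ℝ :=
  Real.sqrt (frobSq M)

/-- The unconstrained-features objective `g`. -/
def g (lW lH : ℝ) (W : Matrix (Fin K) (Fin d) ℝ)
    (H : Matrix (Fin d) (Fin K × Fin n) ℝ) : ℝ :=
  (1 / (2 * (K : ℝ) * n)) * frobSq (W * H - Ymat K n) +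
    (lW / (2 * (K : ℝ))) * frobSq W + (lH / (2 * (K : ℝ) * n)) * frobSq H

/-- Class means. -/
def classMean (H : Matrix (Fin d) (Fin K × Fin n) ℝ) (k : Fin K) : Fin d → ℝ :=
  fun a => (1 / (n : ℝ)) * ∑ i, H a (k, i)

/-- Global mean. -/
def globalMean (H : Matrix (Fin d) (Fin K × Fin n) ℝ) : Fin d → ℝ :=
  fun a => (1 / ((K : ℝ) * n)) * ∑ p, H a p

/-- Matrix of class means `H̄ ∈ ℝ^{d×K}`. -/
def Hbar (H : Matrix (Fin d) (Fin K × Fin n) ℝ) : Matrix (Fin d) (Fin K) ℝ :=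
  Matrix.of fun a k => classMean H k a

/-- `H̄ ⊗ 1_nᵀ`: the matrix whose n columns of class k all equal the class mean. -/
def HbarSpread (H : Matrix (Fin d) (Fin K × Fin n) ℝ) :
    Matrix (Fin d) (Fin K × Fin n) ℝ :=
  Matrix.of fun a p => classMean H p.1 a

/-- Within-class covariance. -/
def SigmaW (H : Matrix (Fin d) (Fin K × Fin n) ℝ) : Matrix (Fin d) (Fin d) ℝ :=
  Matrix.of fun a b =>
    (1 / ((K : ℝ) * n)) * ∑ p : Fin K × Fin n,
      (H a p - classMean H p.1 a) * (H b p - classMean H p.1 b)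

/-- Between-class covariance. -/
def SigmaB (H : Matrix (Fin d) (Fin K × Fin n) ℝ) : Matrix (Fin d) (Fin d) ℝ :=
  Matrix.of fun a b =>
    (1 / (K : ℝ)) * ∑ k : Fin K,
      (classMean H k a - globalMean H a) * (classMean H k b - globalMean H b)

/-- Non-centered total covariance. -/
def SigmaTtil (H : Matrix (Fin d) (Fin K × Fin n) ℝ) : Matrix (Fin d) (Fin d) ℝ :=
  (1 / ((K : ℝ) * n)) • (H * Hᵀ)

/-- Non-centered between-class covariance. -/
def SigmaBtil (H : Matrix (Fin d) (Fin K × Fin n) ℝ) : Matrix (Fin d) (Fin d) ℝ :=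
  Matrix.of fun a b => (1 / (K : ℝ)) * ∑ k : Fin K, classMean H k a * classMean H k b

/-- The closed-form optimal last-layer weights `W*(H)`. -/
def Wstar (lW : ℝ) (H : Matrix (Fin d) (Fin K × Fin n) ℝ) :
    Matrix (Fin K) (Fin d) ℝ :=
  Ymat K n * Hᵀ * (H * Hᵀ + ((n : ℝ) * lW) • (1 : Matrix (Fin d) (Fin d) ℝ))⁻¹

/-- The central-path loss `L(H)`. -/
def Lcp (lW lH : ℝ) (H : Matrix (Fin d) (Fin K × Fin n) ℝ) : ℝ :=
  (1 / (2 * (K : ℝ) * n)) * frobSq (Wstar lW H * H - Ymat K n) +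
    (lW / (2 * (K : ℝ))) * frobSq (Wstar lW H) +
    (lH / (2 * (K : ℝ) * n)) * frobSq H

/-- `A(H) = Σ̃_T(H) + (λ_W/K) I`. -/
def Amat (lW : ℝ) (H : Matrix (Fin d) (Fin K × Fin n) ℝ) : Matrix (Fin d) (Fin d) ℝ :=
  SigmaTtil H + (lW / (K : ℝ)) • 1

/-- The gradient of the central-path loss w.r.t. the Frobenius inner product. -/
def gradL (lW lH : ℝ) (H : Matrix (Fin d) (Fin K × Fin n) ℝ) :
    Matrix (Fin d) (Fin K × Fin n) ℝ :=
  (1 / ((K : ℝ) ^ 2 * n)) •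
    ((Amat lW H)⁻¹ * (H - HbarSpread H)
      - (Amat lW H)⁻¹ * (SigmaW H + (lW / (K : ℝ)) • 1) * (Amat lW H)⁻¹ * H
      + (lH * (K : ℝ)) • H)

/-- NC1 metric. -/
def NC1til (H : Matrix (Fin d) (Fin K × Fin n) ℝ) : ℝ :=
  (SigmaW H).trace / (SigmaB H).trace

section aux
lemma le_of_sq_le_sq_aux {a b : ℝ} (h : a ^ 2 ≤ b ^ 2) (hb : 0 ≤ b) : a ≤ b :=
  le_trans (le_abs_self a) (abs_le_of_sq_le_sq h hb)

attribute [local instance] Matrix.frobeniusNormedAddCommGroup Matrix.frobeniusNormedSpace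

variable {m p q : Type*} [Fintype m] [Fintype p] [Fintype q] [DecidableEq m] [DecidableEq p]
  [DecidableEq q]

lemma frobNorm_eq (M : Matrix m p ℝ) : frobNorm M = ‖M‖ := by
  rw [Matrix.frobenius_norm_def, frobNorm, frobSq, Real.sqrt_eq_rpow]
  simp

lemma frobSq_eq (M : Matrix m p ℝ) : frobSq M = ‖M‖ ^ 2 := by
  rw [← frobNorm_eq, frobNorm, Real.sq_sqrt]
  exact Finset.sum_nonneg fun _ _ => Finset.sum_nonneg fun _ _ => sq_nonneg _

lemma normSq_trace (M : Matrix m p ℝ) : ‖M‖ ^ 2 = (Mᵀ * M).trace := by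
  rw [← frobSq_eq, frobSq, Matrix.trace, Finset.sum_comm]
  simp [Matrix.mul_apply, sq]

lemma norm_tr (M : Matrix m p ℝ) : ‖Mᵀ‖ = ‖M‖ := Matrix.frobenius_norm_transpose M

/-- resolvent bounds -/
lemma res_bound (s : ℝ) (hs : 0 < s) (H : Matrix m p ℝ) (Z X : Matrix m q ℝ)
    (h : (H * Hᵀ + (s ^ 2) • (1 : Matrix m m ℝ)) * Z = X) :
    s ^ 2 * ‖Z‖ ≤ ‖X‖ ∧ s * ‖Hᵀ * Z‖ ≤ ‖X‖ := by
  have h1 : (Zᵀ * X).trace = ‖Hᵀ * Z‖ ^ 2 + s ^ 2 * ‖Z‖ ^ 2 := by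
    rw [normSq_trace, normSq_trace, ← h]
    simp [Matrix.add_mul, Matrix.mul_add, Matrix.mul_assoc]
  have h2 : ‖X - s ^ 2 • Z‖ ^ 2 = ‖X‖ ^ 2 - 2 * s ^ 2 * (Zᵀ * X).trace + s ^ 4 * ‖Z‖ ^ 2 := by
    rw [normSq_trace, normSq_trace, normSq_trace]
    have : (Xᵀ * Z).trace = (Zᵀ * X).trace := by
      rw [← Matrix.trace_transpose]; simp
    simp [Matrix.sub_mul, Matrix.mul_sub, this]
    ring
  have h3 := sq_nonneg ‖X - s ^ 2 • Z‖
  have key : s ^ 4 * ‖Z‖ ^ 2 + 2 * (s ^ 2 * ‖Hᵀ * Z‖ ^ 2) ≤ ‖X‖ ^ 2 := by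
    rw [h2, h1] at h3; nlinarith
  have a1 : 0 ≤ s ^ 4 * ‖Z‖ ^ 2 := by positivity
  have a2 : 0 ≤ s ^ 2 * ‖Hᵀ * Z‖ ^ 2 := by positivity
  constructor
  · apply le_of_sq_le_sq_aux _ (norm_nonneg _); nlinarith
  · apply le_of_sq_le_sq_aux _ (norm_nonneg _); nlinarith

lemma G_unit (s : ℝ) (hs : 0 < s) (H : Matrix m p ℝ) :
    IsUnit (H * Hᵀ + (s ^ 2) • (1 : Matrix m m ℝ)).det := by
  rw [← Matrix.isUnit_iff_isUnit_det]
  apply Matrix.PosDef.isUnit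
  apply Matrix.PosDef.posSemidef_add
  · simpa using Matrix.posSemidef_self_mul_conjTranspose H
  · exact Matrix.PosDef.one.smul (by positivity)

/-- `(H Hᵀ + s² I)⁻¹` -/
def Res (s : ℝ) (H : Matrix m p ℝ) : Matrix m m ℝ := (H * Hᵀ + (s ^ 2) • (1 : Matrix m m ℝ))⁻¹

lemma Res_symm (s : ℝ) (H : Matrix m p ℝ) : (Res s H)ᵀ = Res s H := by
  simp [Res, Matrix.transpose_nonsing_inv]

lemma G_Res (s : ℝ) (hs : 0 < s) (H : Matrix m p ℝ) :
    (H * Hᵀ + (s ^ 2) • (1 : Matrix m m ℝ)) * Res s H = 1 := 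
  Matrix.mul_nonsing_inv _ (G_unit s hs H)

lemma Res_G (s : ℝ) (hs : 0 < s) (H : Matrix m p ℝ) :
    Res s H * (H * Hᵀ + (s ^ 2) • (1 : Matrix m m ℝ)) = 1 := 
  Matrix.nonsing_inv_mul _ (G_unit s hs H)

lemma Res_left (s : ℝ) (hs : 0 < s) (H : Matrix m p ℝ) (X : Matrix m q ℝ) :
    s ^ 2 * ‖Res s H * X‖ ≤ ‖X‖ ∧ s * ‖Hᵀ * (Res s H * X)‖ ≤ ‖X‖ :=
  res_bound s hs H _ X (by rw [← Matrix.mul_assoc, G_Res s hs, Matrix.one_mul])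

lemma push (s : ℝ) (hs : 0 < s) (H : Matrix m p ℝ) : Res s H * H = H * Res s Hᵀ := by
  have h : H * (Hᵀ * Hᵀᵀ + (s ^ 2) • (1 : Matrix p p ℝ))
      = (H * Hᵀ + (s ^ 2) • (1 : Matrix m m ℝ)) * H := by
    simp [Matrix.mul_add, Matrix.add_mul, Matrix.mul_assoc]
  calc Res s H * H = Res s H * (H * (Hᵀ * Hᵀᵀ + (s ^ 2) • (1 : Matrix p p ℝ))) * Res s Hᵀ := by
        rw [Matrix.mul_assoc, Matrix.mul_assoc, G_Res s hs, Matrix.mul_one]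
    _ = _ := by rw [h, ← Matrix.mul_assoc, Res_G s hs, Matrix.one_mul]

/-- `B = (HHᵀ+s²)⁻¹ H` -/
def BB (s : ℝ) (H : Matrix m p ℝ) : Matrix m p ℝ := Res s H * H

lemma BBt (s : ℝ) (hs : 0 < s) (H : Matrix m p ℝ) : (BB s H)ᵀ = BB s Hᵀ := by
  rw [BB, BB, Matrix.transpose_mul, Res_symm, push s hs, Matrix.transpose_transpose]

lemma BB_left (s : ℝ) (hs : 0 < s) (H : Matrix m p ℝ) (X : Matrix p q ℝ) :
    s * ‖BB s H * X‖ ≤ ‖X‖ := by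
  rw [BB, push s hs, Matrix.mul_assoc]
  simpa using (Res_left s hs Hᵀ X).2

lemma BB_right (s : ℝ) (hs : 0 < s) (H : Matrix m p ℝ) (X : Matrix q m ℝ) :
    s * ‖X * BB s H‖ ≤ ‖X‖ := by
  rw [← norm_tr (X * _), Matrix.transpose_mul, BBt s hs, ← norm_tr X]
  exact BB_left s hs _ _

lemma Res_right (s : ℝ) (hs : 0 < s) (H : Matrix m p ℝ) (X : Matrix q m ℝ) :
    s ^ 2 * ‖X * Res s H‖ ≤ ‖X‖ := by
  rw [← norm_tr (X * _), Matrix.transpose_mul, Res_symm, ← norm_tr X]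
  exact (Res_left s hs _ _).1

lemma proj_left (P : Matrix p p ℝ) (hP : Pᵀ = P) (hPP : P * P = P) (X : Matrix p q ℝ) :
    ‖P * X‖ ≤ ‖X‖ := by
  have h : ‖X - P * X‖ ^ 2 = ‖X‖ ^ 2 - ‖P * X‖ ^ 2 := by
    rw [normSq_trace, normSq_trace, normSq_trace]
    simp only [Matrix.sub_mul, Matrix.mul_sub, Matrix.transpose_sub, Matrix.transpose_mul, hP,
      Matrix.trace_sub]
    have e : Xᵀ * P * (P * X) = Xᵀ * P * X := by
      rw [Matrix.mul_assoc, ← Matrix.mul_assoc P, hPP, Matrix.mul_assoc]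
    rw [e, ← Matrix.mul_assoc]; ring
  apply le_of_sq_le_sq_aux _ (norm_nonneg _)
  nlinarith [sq_nonneg ‖X - P * X‖]

lemma proj_right (P : Matrix p p ℝ) (hP : Pᵀ = P) (hPP : P * P = P) (X : Matrix q p ℝ) :
    ‖X * P‖ ≤ ‖X‖ := by
  rw [← norm_tr (X * _), Matrix.transpose_mul, hP, ← norm_tr X]
  exact proj_left P hP hPP _

lemma BB_diff (s : ℝ) (hs : 0 < s) (H H' : Matrix m p ℝ) :
    s ^ 2 * ‖BB s H - BB s H'‖ ≤ 2 * ‖H - H'‖ := by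
  have e : BB s H - BB s H' = (s ^ 2) • (Res s H * (H - H') * Res s H'ᵀ)
      - BB s H * ((H - H')ᵀ * BB s H') := by
    have e1 : BB s H = Res s H * (H * (H'ᵀ * H'ᵀᵀ + (s ^ 2) • (1 : Matrix p p ℝ))) * Res s H'ᵀ := by
      rw [Matrix.mul_assoc, Matrix.mul_assoc, G_Res s hs, Matrix.mul_one, BB]
    have e2 : BB s H' = Res s H * ((H * Hᵀ + (s ^ 2) • (1 : Matrix m m ℝ)) * H') * Res s H'ᵀ := by
      rw [← Matrix.mul_assoc (Res s H), Res_G s hs, Matrix.one_mul, BB, push s hs]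
    have e3 : BB s H * ((H - H')ᵀ * BB s H') = 
        Res s H * (H * (H - H')ᵀ * H') * Res s H'ᵀ := by
      rw [BB, BB, push s hs H']; simp only [Matrix.mul_assoc]
    rw [e3, e1, e2, ← Matrix.sub_mul, ← Matrix.mul_sub, ← Matrix.smul_mul, ← Matrix.mul_smul,
      ← Matrix.sub_mul, ← Matrix.mul_sub]
    congr 2
    simp only [Matrix.mul_add, Matrix.add_mul, Matrix.mul_sub, Matrix.sub_mul,
      Matrix.transpose_sub, Matrix.transpose_transpose, Matrix.mul_smul, Matrix.smul_mul,
      Matrix.mul_one, Matrix.one_mul, smul_sub, Matrix.mul_assoc]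
    abel
  have b1 := norm_sub_le ((s ^ 2) • (Res s H * (H - H') * Res s H'ᵀ))
    (BB s H * ((H - H')ᵀ * BB s H'))
  rw [← e, norm_smul, Real.norm_of_nonneg (by positivity)] at b1
  have c1 := Res_right s hs H'ᵀ (Res s H * (H - H'))
  have c2 := (Res_left s hs H (H - H')).1
  have c3 := BB_left s hs H ((H - H')ᵀ * BB s H')
  have c4 := BB_right s hs H' (H - H')ᵀ
  rw [norm_tr] at c4
  have c5 := mul_le_mul_of_nonneg_left c3 hs.le
  have c6 := mul_le_mul_of_nonneg_left b1 (sq_nonneg s)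
  have c7 := mul_le_mul_of_nonneg_left c1 (sq_nonneg s)
  nlinarith

lemma SS_diff (s : ℝ) (hs : 0 < s) (H H' : Matrix m p ℝ) :
    s * (s ^ 2 * ‖Res s Hᵀ - Res s H'ᵀ‖) ≤ 2 * ‖H - H'‖ := by
  have e : Res s Hᵀ - Res s H'ᵀ = Res s Hᵀ * ((H' - H)ᵀ * BB s H')
      + (BB s Hᵀ * (H' - H)) * Res s H'ᵀ := by
    have e1 : Res s Hᵀ = Res s Hᵀ * (H'ᵀ * H'ᵀᵀ + (s ^ 2) • (1 : Matrix p p ℝ)) * Res s H'ᵀ := by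
      rw [Matrix.mul_assoc, G_Res s hs, Matrix.mul_one]
    have e2 : Res s H'ᵀ = Res s Hᵀ * (Hᵀ * Hᵀᵀ + (s ^ 2) • (1 : Matrix p p ℝ)) * Res s H'ᵀ := by
      rw [Res_G s hs, Matrix.one_mul]
    have e3 : Res s Hᵀ * ((H' - H)ᵀ * BB s H')
      + (BB s Hᵀ * (H' - H)) * Res s H'ᵀ =
       Res s Hᵀ * ((H' - H)ᵀ * H' + Hᵀ * (H' - H)) * Res s H'ᵀ := by
      rw [BB, BB, push s hs H']; simp only [Matrix.mul_assoc, Matrix.mul_add, Matrix.add_mul]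
    rw [e3]
    conv_lhs => rw [e2]; arg 1; rw [e1]
    rw [← Matrix.sub_mul, ← Matrix.mul_sub]
    congr 2
    simp only [Matrix.mul_sub, Matrix.sub_mul,
      Matrix.transpose_sub, Matrix.transpose_transpose]
    abel
  have b1 := norm_add_le (Res s Hᵀ * ((H' - H)ᵀ * BB s H')) ((BB s Hᵀ * (H' - H)) * Res s H'ᵀ)
  rw [← e] at b1
  have c1 := (Res_left s hs Hᵀ ((H' - H)ᵀ * BB s H')).1
  have c2 := BB_right s hs H' (H' - H)ᵀ
  have c3 := Res_right s hs H'ᵀ (BB s Hᵀ * (H' - H))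
  have c4 := BB_left s hs Hᵀ (H' - H)
  rw [norm_tr] at c2
  rw [norm_sub_rev H' H] at c2 c4
  have c5 := mul_le_mul_of_nonneg_left c1 hs.le
  have c6 := mul_le_mul_of_nonneg_left c3 hs.le
  have c7 := mul_le_mul_of_nonneg_left b1 (by positivity : 0 ≤ s * s ^ 2)
  nlinarith

lemma F_diff (s : ℝ) (hs : 0 < s) (P : Matrix p p ℝ) (hP : Pᵀ = P) (hPP : P * P = P)
    (H H' : Matrix m p ℝ) :
    s ^ 2 * ‖BB s H * P * (s ^ 2 • Res s Hᵀ) - BB s H' * P * (s ^ 2 • Res s H'ᵀ)‖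
      ≤ 4 * ‖H - H'‖ := by
  have e : BB s H * P * (s ^ 2 • Res s Hᵀ) - BB s H' * P * (s ^ 2 • Res s H'ᵀ)
      = s ^ 2 • ((BB s H - BB s H') * P * Res s Hᵀ)
        + s ^ 2 • (BB s H' * (P * (Res s Hᵀ - Res s H'ᵀ))) := by
    simp only [Matrix.mul_sub, Matrix.sub_mul, Matrix.mul_smul, smul_sub, Matrix.mul_assoc]
    abel
  rw [e]
  have b1 := norm_add_le (s ^ 2 • ((BB s H - BB s H') * P * Res s Hᵀ))
    (s ^ 2 • (BB s H' * (P * (Res s Hᵀ - Res s H'ᵀ))))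
  have hn : ‖s ^ 2‖ = s ^ 2 := Real.norm_of_nonneg (by positivity)
  rw [norm_smul, norm_smul, hn] at b1
  have c1 := Res_right s hs Hᵀ ((BB s H - BB s H') * P)
  have c2 := proj_right P hP hPP (BB s H - BB s H')
  have c3 := BB_diff s hs H H'
  have c4 := BB_left s hs H' (P * (Res s Hᵀ - Res s H'ᵀ))
  have c5 := proj_left P hP hPP (Res s Hᵀ - Res s H'ᵀ)
  have c6 := SS_diff s hs H H'
  have d1 := mul_le_mul_of_nonneg_left (c1.trans c2) (sq_nonneg s)
  have d2 := mul_le_mul_of_nonneg_left (c4.trans c5) (by positivity : 0 ≤ s * s ^ 2)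
  have d3 := mul_le_mul_of_nonneg_left b1 (sq_nonneg s)
  nlinarith

/-- algebraic simplification -/
lemma F_eq (s : ℝ) (hs : 0 < s) (P : Matrix p p ℝ) (H : Matrix m p ℝ) :
    Res s H * (H - H * P) - Res s H * (H * (1 - P) * Hᵀ + s ^ 2 • (1 : Matrix m m ℝ)) * Res s H * H
      = - (BB s H * P * (s ^ 2 • Res s Hᵀ)) := by
  have e1 : H * (1 - P) * Hᵀ + s ^ 2 • (1 : Matrix m m ℝ)
      = (H * Hᵀ + s ^ 2 • (1 : Matrix m m ℝ)) - H * P * Hᵀ := by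
    simp only [Matrix.mul_sub, Matrix.sub_mul, Matrix.mul_one]; abel
  have e2 : s ^ 2 • Res s Hᵀ = 1 - Hᵀ * (Res s H * H) := by
    have := G_Res s hs Hᵀ
    rw [Matrix.add_mul, Matrix.smul_mul, Matrix.one_mul, Matrix.transpose_transpose,
      Matrix.mul_assoc, ← push s hs] at this
    rw [← this]; abel
  rw [e1, e2, Matrix.mul_sub (Res s H) (H * Hᵀ + _), Res_G s hs, BB]
  simp only [Matrix.mul_sub, Matrix.sub_mul, Matrix.mul_one, Matrix.one_mul, Matrix.mul_assoc]
  abel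

/-- class averaging projection -/
def Pm (K n : ℕ) : Matrix (Fin K × Fin n) (Fin K × Fin n) ℝ :=
  Matrix.of fun a b => if a.1 = b.1 then 1 / (n : ℝ) else 0

lemma Pm_symm (K n : ℕ) : (Pm K n)ᵀ = Pm K n := by
  ext a b; simp [Pm, eq_comm]

lemma mul_Pm {d K n : ℕ} (H : Matrix (Fin d) (Fin K × Fin n) ℝ) : H * Pm K n = HbarSpread H := by
  ext a b
  simp only [Matrix.mul_apply, Pm, HbarSpread, classMean, Matrix.of_apply, Fintype.sum_prod_type]
  rw [Finset.sum_eq_single b.1]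
  · simp [Finset.mul_sum, mul_comm]
  · intro c _ hc; simp [hc]
  · simp

lemma Pm_idem (K n : ℕ) (hn : 0 < n) : Pm K n * Pm K n = Pm K n := by
  have hn' : (n : ℝ) ≠ 0 := by positivity
  ext a b
  simp only [Matrix.mul_apply, Pm, Matrix.of_apply, Fintype.sum_prod_type]
  rw [Finset.sum_eq_single b.1]
  · by_cases h : a.1 = b.1 <;> simp [h, hn']
  · intro c _ hc; simp [hc]
  · simp

lemma SigmaW_eq {d K n : ℕ} (hn : 0 < n) (H : Matrix (Fin d) (Fin K × Fin n) ℝ) :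
    SigmaW H = (1 / ((K : ℝ) * n)) • (H * (1 - Pm K n) * Hᵀ) := by
  have h1 : SigmaW H = (1 / ((K : ℝ) * n)) • ((H - HbarSpread H) * (H - HbarSpread H)ᵀ) := by
    ext a b
    simp [SigmaW, HbarSpread, Matrix.mul_apply]
  rw [h1, ← mul_Pm]
  congr 1
  have e : (H * Pm K n) * (H * Pm K n)ᵀ = H * Pm K n * Hᵀ := by
    rw [Matrix.transpose_mul, Pm_symm, Matrix.mul_assoc, ← Matrix.mul_assoc (Pm K n),
      Pm_idem K n hn, ← Matrix.mul_assoc]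
  have e' : H * (H * Pm K n)ᵀ = H * Pm K n * Hᵀ := by
    rw [Matrix.transpose_mul, Pm_symm, Matrix.mul_assoc]
  rw [Matrix.transpose_sub, Matrix.mul_sub, Matrix.sub_mul, Matrix.sub_mul, e, e', Matrix.mul_sub,
    Matrix.sub_mul, Matrix.mul_one]
  abel

lemma gradL_eq {d K n : ℕ} (hK : 0 < K) (hn : 0 < n) (lW lH s : ℝ) (hs : 0 < s)
    (hsl : s ^ 2 = n * lW) (H : Matrix (Fin d) (Fin K × Fin n) ℝ) :
    gradL lW lH H = (1 / (K : ℝ)) • (-(BB s H * Pm K n * (s ^ 2 • Res s Hᵀ)))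
      + (lH / (K * n)) • H := by
  have hn' : (n : ℝ) ≠ 0 := by positivity
  have hK' : (K : ℝ) ≠ 0 := by positivity
  have hl : lW / (K : ℝ) = (1 / ((K : ℝ) * n)) * s ^ 2 := by rw [hsl]; field_simp
  have hA : (Amat lW H)⁻¹ = ((K : ℝ) * n) • Res s H := by
    have : Amat lW H = (1 / ((K : ℝ) * n)) • (H * Hᵀ + s ^ 2 • (1 : Matrix (Fin d) (Fin d) ℝ)) := by
      rw [Amat, SigmaTtil, hl, smul_add, smul_smul]
    rw [this]
    apply Matrix.inv_eq_right_inv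
    rw [Matrix.smul_mul, Matrix.mul_smul, G_Res s hs, smul_smul]
    rw [one_div, inv_mul_cancel₀ (by positivity), one_smul]
  have hS : SigmaW H + (lW / (K : ℝ)) • 1
      = (1 / ((K : ℝ) * n)) • (H * (1 - Pm K n) * Hᵀ + s ^ 2 • (1 : Matrix (Fin d) (Fin d) ℝ)) := by
    rw [SigmaW_eq hn, hl, smul_add, smul_smul]
  rw [gradL, hA, hS, ← mul_Pm, ← F_eq s hs]
  generalize H * (1 - Pm K n) * Hᵀ + s ^ 2 • (1 : Matrix (Fin d) (Fin d) ℝ) = T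
  simp only [Matrix.smul_mul, Matrix.mul_smul, smul_add, smul_sub, smul_smul]
  congr 1
  · congr 1
    · congr 1; field_simp
    · congr 1; field_simp
  · congr 1; field_simp

lemma gradL_lip_aux {d K n : ℕ} (hK : 0 < K) (hn : 0 < n) (lW lH s : ℝ) (hlW : 0 < lW)
    (hlH : 0 ≤ lH) (hs : 0 < s)
    (hsl : s ^ 2 = n * lW) (H H' : Matrix (Fin d) (Fin K × Fin n) ℝ) :
    frobNorm (gradL lW lH H - gradL lW lH H')
      ≤ (1 / ((K : ℝ) * n)) * (10 / lW + lH) * frobNorm (H - H') := by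
  have hn' : (0 : ℝ) < n := by positivity
  have hK' : (0 : ℝ) < K := by positivity
  rw [frobNorm_eq, frobNorm_eq, gradL_eq hK hn lW lH s hs hsl, gradL_eq hK hn lW lH s hs hsl]
  have h := F_diff s hs (Pm K n) (Pm_symm K n) (Pm_idem K n hn) H H'
  set F := BB s H * Pm K n * (s ^ 2 • Res s Hᵀ)
  set F' := BB s H' * Pm K n * (s ^ 2 • Res s H'ᵀ)
  have e : (1 / (K : ℝ)) • (-F) + (lH / (K * n)) • H - ((1 / (K : ℝ)) • (-F') + (lH / (K * n)) • H')
      = (-(1 / (K : ℝ))) • (F - F') + (lH / (K * n)) • (H - H') := by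
    simp only [smul_sub, smul_neg, neg_smul]; abel
  rw [e]
  refine (norm_add_le _ _).trans ?_
  rw [norm_smul, norm_smul, norm_neg, Real.norm_of_nonneg (by positivity),
    Real.norm_of_nonneg (by positivity)]
  have h2 : ‖F - F'‖ ≤ 10 / (n * lW) * ‖H - H'‖ := by
    rw [hsl] at h
    rw [div_mul_eq_mul_div, le_div_iff₀ (by positivity)]
    nlinarith [norm_nonneg (H - H')]
  calc _ ≤ 1 / (K : ℝ) * (10 / (n * lW) * ‖H - H'‖) + lH / (K * n) * ‖H - H'‖ := by gcongr
    _ = _ := by field_simp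

end aux

/-- the gradient of the central-path loss is globally Lipschitz:
`‖∇L(H) − ∇L(H')‖_F ≤ (1/(Kn))(10/λ_W + λ_H)‖H − H'‖_F`. -/
theorem gradL_lipschitz
    (K n d : ℕ) (hK : 0 < K) (hn : 0 < n) (hdK : K ≤ d)
    (lW lH : ℝ) (hlW : 0 < lW) (hlH : 0 ≤ lH)
    (H H' : Matrix (Fin d) (Fin K × Fin n) ℝ) :
    frobNorm (gradL lW lH H - gradL lW lH H')
      ≤ (1 / ((K : ℝ) * n)) * (10 / lW + lH) * frobNorm (H - H') := by
  have hn' : (0 : ℝ) < n := by positivity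
  obtain ⟨s, hs, hsl⟩ : ∃ s : ℝ, 0 < s ∧ s ^ 2 = n * lW :=
    ⟨Real.sqrt (n * lW), by positivity, Real.sq_sqrt (by positivity)⟩
  exact gradL_lip_aux hK hn lW lH s hlW hlH hs hsl H H'

end
end

section
/- Let λ_W > 0, λ_H ≥ 0, set ℓ := 10/λ_W + λ_H, and let β > ℓ. If H* is a global minimizer of H ↦ L(H) + (β/(2Kn))‖H − H₀‖_F² and H̃* is a global minimizer of H ↦ L(H) + (β/(2Kn))‖H − H̃₀‖_F², for inputs H₀, H̃₀ ∈ ℝ^{d×Kn}, then ‖H* − H̃*‖_F ≤ (1 − ℓ/β)^{-1} ‖H₀ − H̃₀‖_F; i.e., the input-to-minimizer map is (1 − ℓ/β)^{-1}-Lipschitz. -/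
open Matrix Filter
open scoped BigOperators

noncomputable section

variable {K n d : ℕ}

/-- Frobenius inner product. -/
def ip {m p : Type*} [Fintype m] [Fintype p] (A B : Matrix m p ℝ) : ℝ :=
  ∑ i, ∑ j, A i j * B i j

section helpers
variable {m p q : Type*} [Fintype m] [Fintype p] [Fintype q]

lemma ip_trace (A B : Matrix m p ℝ) : ip A B = (A * Bᵀ).trace := by
  simp [ip, Matrix.trace, Matrix.mul_apply]

lemma ip_self (A : Matrix m p ℝ) : ip A A = frobSq A := by
  simp [ip, frobSq, sq]

lemma ip_comm (A B : Matrix m p ℝ) : ip A B = ip B A := by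
  simp [ip, mul_comm]

lemma ip_add_left (A B C : Matrix m p ℝ) : ip (A + B) C = ip A C + ip B C := by
  simp [ip, add_mul, Finset.sum_add_distrib]

lemma ip_sub_left (A B C : Matrix m p ℝ) : ip (A - B) C = ip A C - ip B C := by
  simp [ip, sub_mul, Finset.sum_sub_distrib]

lemma ip_smul_left (c : ℝ) (A C : Matrix m p ℝ) : ip (c • A) C = c * ip A C := by
  simp [ip, Finset.mul_sum, mul_assoc]

lemma ip_add_right (A B C : Matrix m p ℝ) : ip C (A + B) = ip C A + ip C B := by
  simp [ip, mul_add, Finset.sum_add_distrib]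

lemma ip_sub_right (A B C : Matrix m p ℝ) : ip C (A - B) = ip C A - ip C B := by
  simp [ip, mul_sub, Finset.sum_sub_distrib]

lemma ip_smul_right (c : ℝ) (A C : Matrix m p ℝ) : ip C (c • A) = c * ip C A := by
  rw [ip_comm, ip_smul_left, ip_comm]

lemma ip_mul_left (A : Matrix m p ℝ) (B : Matrix p q ℝ) (C : Matrix m q ℝ) :
    ip (A * B) C = ip A (C * Bᵀ) := by
  simp [ip_trace, Matrix.transpose_mul, Matrix.mul_assoc]

lemma ip_transpose (A B : Matrix m p ℝ) : ip Aᵀ Bᵀ = ip A B := by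
  simp only [ip, Matrix.transpose_apply]
  exact Finset.sum_comm

lemma ip_mul_left' (A : Matrix m p ℝ) (B : Matrix p q ℝ) (C : Matrix m q ℝ) :
    ip (A * B) C = ip B (Aᵀ * C) := by
  rw [← ip_transpose, Matrix.transpose_mul, ip_mul_left, ← ip_transpose B, Matrix.transpose_mul]

lemma frobSq_nonneg (A : Matrix m p ℝ) : 0 ≤ frobSq A :=
  Finset.sum_nonneg fun _ _ => Finset.sum_nonneg fun _ _ => sq_nonneg _

lemma frobSq_transpose (A : Matrix m p ℝ) : frobSq Aᵀ = frobSq A := by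
  rw [← ip_self, ip_transpose, ip_self]

lemma ip_cauchy (A B : Matrix m p ℝ) : ip A B ^ 2 ≤ frobSq A * frobSq B := by
  have h := Finset.sum_mul_sq_le_sq_mul_sq (Finset.univ : Finset (m × p))
    (fun x => A x.1 x.2) (fun x => B x.1 x.2)
  simpa [Fintype.sum_prod_type, ip, frobSq] using h

/-- Dual lower bound, valid for every `W` and `N`. -/
lemma dual_lower (μ : ℝ) (hμ : 0 < μ) (W : Matrix m p ℝ) (H : Matrix p q ℝ)
    (Y N : Matrix m q ℝ) :
    2 * μ * ip Y N - μ ^ 2 * frobSq N - μ * frobSq (N * Hᵀ)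
      ≤ frobSq (W * H - Y) + μ * frobSq W := by
  have h1 := frobSq_nonneg (W * H - Y + μ • N)
  have h2 := frobSq_nonneg (W - N * Hᵀ)
  have h3 := ip_mul_left W H N
  simp only [← ip_self, ip_add_left, ip_sub_left, ip_add_right, ip_sub_right, ip_smul_left,
    ip_smul_right] at *
  rw [ip_comm N (W * H), ip_comm N Y] at h1
  rw [ip_comm (N * Hᵀ) W] at h2
  have h4 := mul_nonneg hμ.le h2
  nlinarith

lemma dual_attained (μ : ℝ) (hμ : 0 < μ) (W : Matrix m p ℝ) (H : Matrix p q ℝ)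
    (Y N : Matrix m q ℝ) (hN : μ • N = Y - W * H) (hW : N * Hᵀ = W) :
    frobSq (W * H - Y) + μ * frobSq W =
    2 * μ * ip Y N - μ ^ 2 * frobSq N - μ * frobSq (N * Hᵀ) := by
  have h3 := ip_mul_left W H N
  have hY : Y = μ • N + W * H := by rw [hN]; abel
  have e : W * H - Y = - μ • N := by rw [neg_smul, hN]; abel
  rw [e, hY, hW] at *
  simp only [← ip_self, ip_add_left, ip_smul_left, ip_smul_right]
  rw [h3]; ring

lemma N_bound (μ c : ℝ) (hμ : 0 < μ) (hc : 0 < c) (H : Matrix p q ℝ) (Y N : Matrix m q ℝ)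
    (hN : N * Hᵀ * H + μ • N = Y)
    (hY : ∀ U : Matrix m p ℝ, frobSq (Yᵀ * U) = c * frobSq U)
    (D : Matrix p q ℝ) : μ ^ 2 * frobSq (N * Dᵀ) ≤ c * frobSq D := by
  set U := N * Dᵀ with hU
  set X := Nᵀ * U with hX
  have h1 : frobSq (H * X) + μ * frobSq X = ip X (Yᵀ * U) := by
    rw [← hN]
    simp only [Matrix.transpose_add, Matrix.transpose_mul, Matrix.transpose_transpose,
      Matrix.transpose_smul, Matrix.add_mul, Matrix.smul_mul, ip_add_right, ip_smul_right]
    rw [← hX, ip_self, ← ip_self (H * X), ip_mul_left']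
    simp only [Matrix.mul_assoc, hX]
  have h2 := ip_cauchy X (Yᵀ * U)
  rw [hY] at h2
  have h3 : frobSq U = ip Dᵀ X := by
    rw [← ip_self]
    conv_lhs => rw [hU, ip_mul_left', ← hU]
  have h4 := ip_cauchy Dᵀ X
  rw [frobSq_transpose, ← h3] at h4
  have n1 := frobSq_nonneg (H * X)
  have n2 := frobSq_nonneg X
  have n3 := frobSq_nonneg U
  have n4 := frobSq_nonneg D
  have h5 : (μ * frobSq X) ^ 2 ≤ frobSq X * (c * frobSq U) := by
    refine le_trans ?_ h2
    apply pow_le_pow_left₀ (by positivity)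
    linarith
  have h6 : μ ^ 2 * frobSq X ≤ c * frobSq U := by
    rcases n2.eq_or_lt with h | h
    · rw [← h]; simp; positivity
    · apply le_of_mul_le_mul_left _ h
      nlinarith
  rcases n3.eq_or_lt with h | h
  · rw [← h]; simp; positivity
  · apply le_of_mul_le_mul_left _ h
    have := mul_le_mul_of_nonneg_left h6 n4
    have := mul_le_mul_of_nonneg_left h4 (sq_nonneg μ)
    nlinarith

lemma frobSq_mix (t : ℝ) (A B : Matrix m p ℝ) :
    frobSq ((1 - t) • A + t • B) =
      (1 - t) * frobSq A + t * frobSq B - t * (1 - t) * frobSq (A - B) := by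
  simp only [← ip_self, ip_add_left, ip_sub_left, ip_add_right, ip_sub_right, ip_smul_left,
    ip_smul_right]
  rw [ip_comm B A]; ring

end helpers

lemma Y_iso {K n : ℕ} {p : Type*} [Fintype p] (U : Matrix (Fin K) p ℝ) :
    frobSq ((Ymat K n)ᵀ * U) = n * frobSq U := by
  simp [frobSq, Matrix.mul_apply, Ymat, Fintype.sum_prod_type, Finset.mul_sum]

/-- The scaled fitting part of the loss. -/
def phi {K n d : ℕ} (lW : ℝ) (H : Matrix (Fin d) (Fin K × Fin n) ℝ) : ℝ :=
  frobSq (Wstar lW H * H - Ymat K n) + (n * lW) * frobSq (Wstar lW H)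

lemma Wstar_eq {K n d : ℕ} (lW : ℝ) (hμ : 0 < (n : ℝ) * lW)
    (H : Matrix (Fin d) (Fin K × Fin n) ℝ) :
    Wstar lW H * H * Hᵀ + ((n : ℝ) * lW) • Wstar lW H = Ymat K n * Hᵀ := by
  have hpd : (H * Hᵀ + ((n : ℝ) * lW) • (1 : Matrix (Fin d) (Fin d) ℝ)).PosDef := by
    refine Matrix.PosDef.posSemidef_add ?_ ?_
    · simpa using Matrix.posSemidef_self_mul_conjTranspose H
    · exact Matrix.PosDef.one.smul hμ
  have hu : IsUnit (H * Hᵀ + ((n : ℝ) * lW) • (1 : Matrix (Fin d) (Fin d) ℝ)).det :=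
    hpd.det_pos.ne'.isUnit
  have : Wstar lW H * (H * Hᵀ + ((n : ℝ) * lW) • (1 : Matrix (Fin d) (Fin d) ℝ))
      = Ymat K n * Hᵀ := by
    rw [Wstar, Matrix.nonsing_inv_mul_cancel_right _ _ hu]
  rw [← this, Matrix.mul_add, Matrix.mul_assoc]
  simp

lemma phi_mix {K n d : ℕ} (lW : ℝ) (hn : 0 < n) (hlW : 0 < lW) (t : ℝ) (h0 : 0 ≤ t) (h1 : t ≤ 1)
    (A B : Matrix (Fin d) (Fin K × Fin n) ℝ) :
    phi lW ((1 - t) • A + t • B) ≤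
      (1 - t) * phi lW A + t * phi lW B + t * (1 - t) * (1 / lW * frobSq (A - B)) := by
  have hn' : (0 : ℝ) < n := by exact_mod_cast hn
  obtain ⟨μ, hμd⟩ : ∃ μ : ℝ, μ = n * lW := ⟨_, rfl⟩
  have hμ : 0 < μ := by rw [hμd]; positivity
  set H := (1 - t) • A + t • B with hH
  have hWe := Wstar_eq lW (hμd ▸ hμ) H
  rw [← hμd] at hWe
  set W := Wstar lW H with hWd
  set N := μ⁻¹ • (Ymat K n - W * H) with hNd
  have hN : μ • N = Ymat K n - W * H := by
    rw [hNd, smul_smul, mul_inv_cancel₀ hμ.ne', one_smul]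
  have hNW : N * Hᵀ = W := by
    rw [hNd, Matrix.smul_mul, Matrix.sub_mul, ← hWe, add_sub_cancel_left, smul_smul,
      inv_mul_cancel₀ hμ.ne', one_smul]
  have e := dual_attained μ hμ W H _ N hN hNW
  have eA := dual_lower μ hμ (Wstar lW A) A (Ymat K n) N
  have eB := dual_lower μ hμ (Wstar lW B) B (Ymat K n) N
  have hb := N_bound μ n hμ hn' H (Ymat K n) N (by rw [hNW, hN]; abel) Y_iso (A - B)
  have hm : frobSq (N * Hᵀ) = (1 - t) * frobSq (N * Aᵀ) + t * frobSq (N * Bᵀ)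
      - t * (1 - t) * frobSq (N * (A - B)ᵀ) := by
    have : N * (A - B)ᵀ = N * Aᵀ - N * Bᵀ := by
      rw [Matrix.transpose_sub, Matrix.mul_sub]
    rw [this, ← frobSq_mix, hH]
    simp [Matrix.mul_add]
  have hb' : μ * frobSq (N * (A - B)ᵀ) ≤ 1 / lW * frobSq (A - B) := by
    have : 1 / lW * frobSq (A - B) = (n * frobSq (A - B)) / μ := by
      rw [hμd]; field_simp
    rw [this, le_div_iff₀ hμ]
    linarith
  unfold phi
  rw [← hμd, ← hWd, e, hm]
  have t1 := mul_le_mul_of_nonneg_left eA (sub_nonneg.2 h1)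
  have t2 := mul_le_mul_of_nonneg_left eB h0
  have t3 := mul_le_mul_of_nonneg_left hb' (mul_nonneg h0 (sub_nonneg.2 h1))
  linarith

lemma strong_min {K n d : ℕ} (hK : 0 < K) (hn : 0 < n)
    (lW lH : ℝ) (hlW : 0 < lW) (hlH : 0 ≤ lH)
    (β : ℝ) (hβ : 10 / lW + lH < β)
    (H₀ A : Matrix (Fin d) (Fin K × Fin n) ℝ)
    (hmin : ∀ H' : Matrix (Fin d) (Fin K × Fin n) ℝ,
      Lcp lW lH A + (β / (2 * (K : ℝ) * n)) * frobSq (A - H₀)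
        ≤ Lcp lW lH H' + (β / (2 * (K : ℝ) * n)) * frobSq (H' - H₀))
    (B : Matrix (Fin d) (Fin K × Fin n) ℝ) :
    phi lW A + lH * frobSq A + β * frobSq (A - H₀) + (β - (10 / lW + lH)) * frobSq (A - B)
      ≤ phi lW B + lH * frobSq B + β * frobSq (B - H₀) := by
  have hn' : (0 : ℝ) < n := by exact_mod_cast hn
  have hK' : (0 : ℝ) < K := by exact_mod_cast hK
  have key : ∀ H : Matrix (Fin d) (Fin K × Fin n) ℝ,
      Lcp lW lH H + (β / (2 * (K : ℝ) * n)) * frobSq (H - H₀) =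
      (phi lW H + lH * frobSq H + β * frobSq (H - H₀)) / (2 * K * n) := by
    intro H
    unfold Lcp phi
    field_simp
  have hmin' : ∀ H : Matrix (Fin d) (Fin K × Fin n) ℝ,
      phi lW A + lH * frobSq A + β * frobSq (A - H₀) ≤
      phi lW H + lH * frobSq H + β * frobSq (H - H₀) := by
    intro H
    have := hmin H
    rw [key, key] at this
    exact (div_le_div_iff_of_pos_right (by positivity)).1 this
  obtain ⟨r, hr⟩ : ∃ r : ℝ, r = 1 / lW := ⟨_, rfl⟩
  have hr0 : 0 < r := by rw [hr]; positivity
  have hr10 : 10 / lW = 10 * r := by rw [hr]; ring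
  rw [hr10] at hβ ⊢
  have hd : 0 < β - r := by linarith
  obtain ⟨t, ht⟩ : ∃ t : ℝ, t = 9 * r / (β - r) := ⟨_, rfl⟩
  have ht' : t * (β - r) = 9 * r := by rw [ht]; field_simp
  have ht0 : 0 < t := by rw [ht]; positivity
  have ht1 : t ≤ 1 := by
    rw [ht, div_le_one hd]; linarith
  have hA := hmin' ((1 - t) • A + t • B)
  have hp := phi_mix lW hn hlW t ht0.le ht1 A B
  have e : (1 - t) • A + t • B - H₀ = (1 - t) • (A - H₀) + t • (B - H₀) := by
    simp only [smul_sub, sub_smul, one_smul]; abel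
  rw [e, frobSq_mix, frobSq_mix, sub_sub_sub_cancel_right] at hA
  rw [← hr] at hp
  have nn := frobSq_nonneg (A - B)
  have q1 : 0 ≤ t * (1 - t) * (lH * frobSq (A - B)) :=
    mul_nonneg (mul_nonneg ht0.le (sub_nonneg.2 ht1)) (mul_nonneg hlH nn)
  have q2 : 0 ≤ t * (lH * frobSq (A - B)) := mul_nonneg ht0.le (mul_nonneg hlH nn)
  apply le_of_mul_le_mul_left _ ht0
  have q3 : (1 - t) * (β - r) = β - 10 * r := by linarith
  have q4 : t * (1 - t) * ((β - r) * frobSq (A - B)) = t * ((β - 10 * r) * frobSq (A - B)) := by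
    rw [← q3]; ring
  linarith

/-- with `ℓ = 10/λ_W + λ_H` and `β > ℓ`, the input-to-minimizer map
`H₀ ↦ argmin_H L(H) + (β/(2Kn))‖H − H₀‖_F²` is `(1 − ℓ/β)⁻¹`-Lipschitz. -/
theorem proximal_map_lipschitz
    (K n d : ℕ) (hK : 0 < K) (hn : 0 < n) (hdK : K ≤ d)
    (lW lH : ℝ) (hlW : 0 < lW) (hlH : 0 ≤ lH)
    (β : ℝ) (hβ : 10 / lW + lH < β)
    (H₀ Ht₀ : Matrix (Fin d) (Fin K × Fin n) ℝ)
    (Hs Hts : Matrix (Fin d) (Fin K × Fin n) ℝ)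
    (hminHs : ∀ H' : Matrix (Fin d) (Fin K × Fin n) ℝ,
      Lcp lW lH Hs + (β / (2 * (K : ℝ) * n)) * frobSq (Hs - H₀)
        ≤ Lcp lW lH H' + (β / (2 * (K : ℝ) * n)) * frobSq (H' - H₀))
    (hminHts : ∀ H' : Matrix (Fin d) (Fin K × Fin n) ℝ,
      Lcp lW lH Hts + (β / (2 * (K : ℝ) * n)) * frobSq (Hts - Ht₀)
        ≤ Lcp lW lH H' + (β / (2 * (K : ℝ) * n)) * frobSq (H' - Ht₀)) :
    frobNorm (Hs - Hts)
      ≤ (1 - (10 / lW + lH) / β)⁻¹ * frobNorm (H₀ - Ht₀) := by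
  have hdpos : 0 < β - (10 / lW + lH) := by linarith
  have hβ0 : 0 < β := by
    have : 0 < 10 / lW := by positivity
    linarith
  have h1 := strong_min hK hn lW lH hlW hlH β hβ H₀ Hs hminHs Hts
  have h2 := strong_min hK hn lW lH hlW hlH β hβ Ht₀ Hts hminHts Hs
  set δ := β - (10 / lW + lH) with hδ
  have hc := ip_cauchy (Hs - Hts) (H₀ - Ht₀)
  have hsymm : frobSq (Hts - Hs) = frobSq (Hs - Hts) := by
    simp only [frobSq, Matrix.sub_apply]
    exact Finset.sum_congr rfl fun _ _ => Finset.sum_congr rfl fun _ _ => by ring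
  have hid : frobSq (Hts - H₀) - frobSq (Hs - H₀) + frobSq (Hs - Ht₀) - frobSq (Hts - Ht₀)
      = 2 * ip (Hs - Hts) (H₀ - Ht₀) := by
    simp only [← ip_self, ip_sub_left, ip_sub_right]
    rw [ip_comm H₀ Hs, ip_comm H₀ Hts, ip_comm Ht₀ Hs, ip_comm Ht₀ Hts]
    ring
  rw [hsymm] at h2
  have h3 : δ * frobSq (Hs - Hts) ≤ β * ip (Hs - Hts) (H₀ - Ht₀) := by
    have := congrArg (fun x => β * x) hid
    linarith
  have hx : frobSq (Hs - Hts) = frobNorm (Hs - Hts) ^ 2 :=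
    (Real.sq_sqrt (frobSq_nonneg _)).symm
  have hy : frobSq (H₀ - Ht₀) = frobNorm (H₀ - Ht₀) ^ 2 :=
    (Real.sq_sqrt (frobSq_nonneg _)).symm
  have x0 : 0 ≤ frobNorm (Hs - Hts) := Real.sqrt_nonneg _
  have y0 : 0 ≤ frobNorm (H₀ - Ht₀) := Real.sqrt_nonneg _
  have h4 : ip (Hs - Hts) (H₀ - Ht₀) ≤ frobNorm (Hs - Hts) * frobNorm (H₀ - Ht₀) := by
    refine abs_le_of_sq_le_sq' ?_ (mul_nonneg x0 y0) |>.2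
    rw [mul_pow, ← hx, ← hy]
    exact hc
  have e : (1 - (10 / lW + lH) / β)⁻¹ = β / δ := by
    rw [hδ, one_sub_div hβ0.ne', inv_div]
  rw [e, div_mul_eq_mul_div, le_div_iff₀ hdpos]
  rcases x0.eq_or_lt with h | h
  · rw [← h]; simp; positivity
  · apply le_of_mul_le_mul_left _ h
    have := mul_le_mul_of_nonneg_left h4 hβ0.le
    rw [hx] at h3
    nlinarith

end
end
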